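/- Assume N ≥ 3. Then (i) an element ω ∈ Ω satisfies dω = 0 if and only if ω ∼ b₀₀ + ψ₁b₁₀ + χ₁b₀₁ for some polynomials b₀₀, b₁₀, b₀₁ ∈ ℂ[ψ₂,…,ψ_N, χ₂,…,χ_N]; and (ii) such a combination is ∼ 0 if and only if b₀₀ = ½ Σ_{i=2}^{N} Σ_{j=2}^{N} (ψᵢχⱼ − χᵢψⱼ)² d₁₁ and ψ₁b₁₀ + χ₁b₀₁ = Σ_{i=2}^{N} [ψᵢ(ψ₁χᵢ − χ₁ψᵢ)d₁₀ − χᵢ(ψ₁χᵢ − χ₁ψᵢ)d₀₁] for some polynomials d₁₁, d₁₀, d₀₁ ∈ ℂ[ψ₂,…,ψ_N, χ₂,…,χ_N]. -/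

import Mathlib

/-!
D = 3 supersymmetry algebra cohomology.
`R3 N = ℂ[ψ₁,…,ψ_N, χ₁,…,χ_N]`, `Om3 N` is the free module with basis
`{1, c̃₁, c̃₂, c̃₃, c̃₁c̃₂, c̃₁c̃₃, c̃₂c̃₃, c̃₁c̃₂c̃₃}` (components 0,…,7), and
`d3` is the odd superderivation with `dc̃₁ = P`, `dc̃₂ = Q`, `dc̃₃ = S`, `d|_R = 0`.
-/

open MvPolynomial

noncomputable section

/-- The polynomial ring `ℂ[ψ₁,…,ψ_N, χ₁,…,χ_N]`; `Sum.inl i ↦ ψᵢ`, `Sum.inr i ↦ χᵢ`. -/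
abbrev R3 (N : ℕ) : Type := MvPolynomial (Fin N ⊕ Fin N) ℂ

/-- `Ω`: free `R3`-module with basis
`{1, c̃₁, c̃₂, c̃₃, c̃₁c̃₂, c̃₁c̃₃, c̃₂c̃₃, c̃₁c̃₂c̃₃}` (components 0,…,7). -/
abbrev Om3 (N : ℕ) : Type := Fin 8 → R3 N

/-- The ghost `ψᵢ`. -/
def ψ {N : ℕ} (i : Fin N) : R3 N := X (Sum.inl i)

/-- The ghost `χᵢ`. -/
def χ {N : ℕ} (i : Fin N) : R3 N := X (Sum.inr i)

/-- `P = Σ ψᵢ²`. -/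
def PP (N : ℕ) : R3 N := ∑ i, ψ i ^ 2

/-- `Q = Σ χᵢ²`. -/
def QQ (N : ℕ) : R3 N := ∑ i, χ i ^ 2

/-- `S = Σ ψᵢχᵢ`. -/
def SS (N : ℕ) : R3 N := ∑ i, ψ i * χ i

/-- The differential: the unique R-linear odd superderivation with
`dc̃₁ = P`, `dc̃₂ = Q`, `dc̃₃ = S` and `d|_R = 0`, written out in components:
`d(ω₀ + c̃₁ω₁ + c̃₂ω₂ + c̃₃ω₃ + c̃₁c̃₂ω₄ + c̃₁c̃₃ω₅ + c̃₂c̃₃ω₆ + c̃₁c̃₂c̃₃ω₇)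
 = Pω₁ + Qω₂ + Sω₃ + (Pc̃₂ − Qc̃₁)ω₄ + (Pc̃₃ − Sc̃₁)ω₅ + (Qc̃₃ − Sc̃₂)ω₆
   + (Pc̃₂c̃₃ − Qc̃₁c̃₃ + Sc̃₁c̃₂)ω₇`. -/
def d3 {N : ℕ} (ω : Om3 N) : Om3 N :=
  ![PP N * ω 1 + QQ N * ω 2 + SS N * ω 3,
    -(QQ N * ω 4) - SS N * ω 5,
    PP N * ω 4 - SS N * ω 6,
    PP N * ω 5 + QQ N * ω 6,
    SS N * ω 7,
    -(QQ N * ω 7),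
    PP N * ω 7,
    0]

/-- Embedding of `R` into `Ω` (coefficient of the basis element `1`). -/
def ofR3 {N : ℕ} (r : R3 N) : Om3 N := ![r, 0, 0, 0, 0, 0, 0, 0]

/-- `ω ∼ ω'` iff `ω − ω' = dρ` for some `ρ`. -/
def Equiv3 {N : ℕ} (ω ω' : Om3 N) : Prop := ∃ ρ, ω - ω' = d3 ρ

/-- The subring `ℂ[ψ₂,…,ψ_N, χ₂,…,χ_N]` of `R3 N`. -/
def coefRing3 (N : ℕ) (hN : 0 < N) : Subalgebra ℂ (R3 N) :=
  MvPolynomial.supported ℂ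
    {v : Fin N ⊕ Fin N | v ≠ Sum.inl ⟨0, hN⟩ ∧ v ≠ Sum.inr ⟨0, hN⟩}

/-!
Let `A` be the coefficient ring and `p`, `q`, `s ∈ A` the parts of `P`, `Q`, `S` free of `ψ₁` and
`χ₁`. Modulo `(P, Q)` the polynomial ring becomes `A[√-p, √-q]`, free over `A` with basis
`1, ψ₁, χ₁, ψ₁χ₁`. There `(ψ₁χ₁ + s)(ψ₁χ₁ - s) = pq - s²`, which is `½ Σ (ψᵢχⱼ - χᵢψⱼ)²` by
Lagrange's identity and nonzero for `N ≥ 3`, so `S = ψ₁χ₁ + s` is not a zero divisor. Hence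
`P, Q, S` is a regular sequence and the Koszul differential `d` has cohomology only in degree `0`,
namely `A[√-p, √-q] / (S)`. Modulo `S` the product `ψ₁χ₁` equals `-s`, which leaves `1, ψ₁, χ₁` as
generators, and comparing coordinates in the multiples of `S` gives the relations between them.
-/

section KoszulSyzygies

open RingTheory.Sequence

variable {R : Type*} [CommRing R]

lemma isWeaklyRegular_concat_iff (rs : List R) (r : R) :
    IsWeaklyRegular R (rs ++ [r]) ↔
      IsWeaklyRegular R rs ∧ ∀ a, r * a ∈ Ideal.ofList rs → a ∈ Ideal.ofList rs := by
  simp only [isWeaklyRegular_append_iff, isWeaklyRegular_singleton_iff,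
    isSMulRegular_quotient_iff_mem_of_smul_mem, smul_eq_mul, Ideal.mul_top]

lemma isWeaklyRegular_pair_iff {p q : R} :
    IsWeaklyRegular R [p, q] ↔ p ∈ nonZeroDivisors R ∧ ∀ a, p ∣ q * a → p ∣ a := by
  rw [show [p, q] = ([] ++ [p]) ++ [q] from rfl, isWeaklyRegular_concat_iff,
    isWeaklyRegular_concat_iff]
  simp [IsWeaklyRegular.nil, Ideal.mem_span_singleton, mem_nonZeroDivisors_iff_left]

lemma isWeaklyRegular_triple_iff {p q s : R} :
    IsWeaklyRegular R [p, q, s] ↔ IsWeaklyRegular R [p, q] ∧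
      ∀ a, s * a ∈ Ideal.span {p, q} → a ∈ Ideal.span {p, q} := by
  simpa [Ideal.span_insert] using isWeaklyRegular_concat_iff [p, q] s

lemma exists_eq_mul_of_isWeaklyRegular_pair {p q a b : R} (h : IsWeaklyRegular R [p, q])
    (hab : p * a + q * b = 0) : ∃ c, a = -(q * c) ∧ b = p * c := by
  obtain ⟨hp, hq⟩ := isWeaklyRegular_pair_iff.1 h
  obtain ⟨c, rfl⟩ := hq b ⟨-a, by linear_combination hab⟩
  refine ⟨c, (mul_cancel_left_mem_nonZeroDivisors hp).1 ?_, rfl⟩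
  linear_combination hab

lemma exists_eq_of_isWeaklyRegular_triple {p q s a b c : R}
    (h : IsWeaklyRegular R [p, q, s]) (habc : p * a + q * b + s * c = 0) :
    ∃ u v w, a = -(q * u) - s * v ∧ b = p * u - s * w ∧ c = p * v + q * w := by
  obtain ⟨hpq, hs⟩ := isWeaklyRegular_triple_iff.1 h
  obtain ⟨v, w, hvw⟩ := Ideal.mem_span_pair.1 <|
    hs c (Ideal.mem_span_pair.2 ⟨-a, -b, by linear_combination -habc⟩)
  obtain ⟨u, ha, hb⟩ := exists_eq_mul_of_isWeaklyRegular_pair (a := a + s * v) (b := b + s * w) hpq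
    (by linear_combination habc + s * hvw)
  exact ⟨u, v, w, by linear_combination ha, by linear_combination hb, by linear_combination -hvw⟩

end KoszulSyzygies

section FreePair

variable (A : Type*) {R T : Type*} [CommRing A] [CommRing R] [Algebra A R] [CommRing T]
  [Algebra A T]

/-- `R` is the polynomial ring over `A` in the two elements `x` and `y`. -/
def IsFreePair (x y : R) : Prop :=
  Function.Bijective (aeval ![x, y] : MvPolynomial (Fin 2) A →ₐ[A] R)

namespace IsFreePair

variable {A} {x y : R} (h : IsFreePair A x y) (ξ η : T)

/-- The evaluation homomorphism of the polynomial ring `R = A[x, y]` at `(ξ, η)`. -/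
def lift : R →ₐ[A] T :=
  (aeval ![ξ, η]).comp (AlgEquiv.ofBijective _ h).symm.toAlgHom

@[simp]
lemma lift_left : h.lift ξ η x = ξ := by
  have hx : (AlgEquiv.ofBijective _ h).symm x = X 0 :=
    (AlgEquiv.symm_apply_eq _).2 (aeval_X ![x, y] 0).symm
  simp [lift, hx]

@[simp]
lemma lift_right : h.lift ξ η y = η := by
  have hy : (AlgEquiv.ofBijective _ h).symm y = X 1 :=
    (AlgEquiv.symm_apply_eq _).2 (aeval_X ![x, y] 1).symm
  simp [lift, hy]

include h in
lemma algHom_ext {f g : R →ₐ[A] T} (hx : f x = g x) (hy : f y = g y) : f = g := by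
  have hcomp : f.comp (aeval ![x, y] : MvPolynomial (Fin 2) A →ₐ[A] R) =
      g.comp (aeval ![x, y]) := by
    ext i
    fin_cases i <;> simpa
  exact (AlgHom.cancel_right h.surjective).1 hcomp

end IsFreePair

lemma isFreePair_X {σ K : Type*} [CommRing K] {i j : σ} (hij : i ≠ j) :
    IsFreePair (supported K {k | k ≠ i ∧ k ≠ j}) (X i : MvPolynomial σ K) (X j) := by
  constructor
  · have hdisj : Disjoint {k | k ≠ i ∧ k ≠ j} {i, j} := by
      simp [Set.disjoint_insert_right]
    have hinj : Function.Injective (![⟨i, by simp⟩, ⟨j, by simp⟩] : Fin 2 → ({i, j} : Set σ)) := by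
      simp [Function.Injective, Fin.forall_fin_two, hij, hij.symm]
    have hcomp := ((algebraicIndependent_X σ K).adjoin_of_disjoint hdisj).comp _ hinj
    have hX : (fun k : ({i, j} : Set σ) ↦ (X k : MvPolynomial σ K)) ∘
        ![⟨i, by simp⟩, ⟨j, by simp⟩] = ![X i, X j] := by
      ext1 k
      fin_cases k <;> rfl
    rwa [hX] at hcomp
  · rw [← AlgHom.range_eq_top, ← (Subalgebra.restrictScalars_injective K).eq_iff,
      Subalgebra.restrictScalars_top, eq_top_iff, ← adjoin_range_X, Algebra.adjoin_le_iff,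
      Set.range_subset_iff]
    intro k
    by_cases hi : k = i
    · exact ⟨X 0, by simp [hi]⟩
    by_cases hj : k = j
    · exact ⟨X 1, by simp [hj]⟩
    exact ⟨C ⟨X k, Algebra.subset_adjoin ⟨k, ⟨hi, hj⟩, rfl⟩⟩, by simp⟩

end FreePair

/-- The algebra `A[√a, √b]`, free over `A` with basis `1, √a, √b, √a√b`: a two-step tower of
Mathlib's quadratic algebras, in which `c.re.re`, `c.re.im`, `c.im.re`, `c.im.im` are the
coordinates of `c` in this basis. -/
abbrev BiquadraticAlgebra {A : Type*} [CommRing A] (a b : A) : Type _ :=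
  QuadraticAlgebra (QuadraticAlgebra A a 0) (QuadraticAlgebra.C b) 0

namespace BiquadraticAlgebra

open scoped QuadraticAlgebra

variable {A : Type*} [CommRing A] {a b : A}

/-- The adjoined square root of `a`. -/
def rootLeft : BiquadraticAlgebra a b := ⟨⟨0, 1⟩, 0⟩

/-- The adjoined square root of `b`. -/
def rootRight : BiquadraticAlgebra a b := ⟨0, 1⟩

lemma algebraMap_eq (r : A) : algebraMap A (BiquadraticAlgebra a b) r = ⟨⟨r, 0⟩, 0⟩ := rfl

lemma rootLeft_sq : (rootLeft : BiquadraticAlgebra a b) ^ 2 = algebraMap A _ a := by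
  rw [sq]; ext <;> simp [rootLeft, algebraMap_eq]

lemma rootRight_sq : (rootRight : BiquadraticAlgebra a b) ^ 2 = algebraMap A _ b := by
  rw [sq]; ext <;> simp [rootRight, algebraMap_eq]

lemma eq_sum_roots (c : BiquadraticAlgebra a b) :
    c = algebraMap A _ c.re.re + rootLeft * algebraMap A _ c.re.im
      + rootRight * algebraMap A _ c.im.re + rootLeft * rootRight * algebraMap A _ c.im.im := by
  ext <;> simp [rootLeft, rootRight, algebraMap_eq]

lemma rootLeft_mul_add_rootRight_mul_injective {b₁ b₂ c₁ c₂ : A}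
    (h : (rootLeft : BiquadraticAlgebra a b) * algebraMap A _ b₁ + rootRight * algebraMap A _ b₂ =
      rootLeft * algebraMap A _ c₁ + rootRight * algebraMap A _ c₂) : b₁ = c₁ ∧ b₂ = c₂ := by
  simpa [QuadraticAlgebra.ext_iff, rootLeft, rootRight, algebraMap_eq] using h

section Lift

variable {T : Type*} [CommRing T] [Algebra A T] {ξ η : T}

/-- The homomorphism sending the adjoined roots to given square roots of `a` and `b`. -/
def lift (hξ : ξ ^ 2 = algebraMap A T a) (hη : η ^ 2 = algebraMap A T b) :
    BiquadraticAlgebra a b →ₐ[A] T where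
  toFun c := algebraMap A T c.re.re + ξ * algebraMap A T c.re.im + η * algebraMap A T c.im.re
    + ξ * η * algebraMap A T c.im.im
  map_one' := by simp
  map_zero' := by simp
  map_add' c e := by
    simp only [QuadraticAlgebra.C_eq_algebraMap, QuadraticAlgebra.re_add, map_add,
      QuadraticAlgebra.im_add]
    ring
  map_mul' c e := by
    simp only [QuadraticAlgebra.C_eq_algebraMap, QuadraticAlgebra.re_mul, QuadraticAlgebra.re_add,
      QuadraticAlgebra.algebraMap_re, QuadraticAlgebra.algebraMap_im, mul_zero, zero_mul, add_zero,
      QuadraticAlgebra.im_mul, map_add, map_mul, ← hξ, ← hη, QuadraticAlgebra.im_add]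
    ring
  commutes' r := by simp [algebraMap_eq]

@[simp]
lemma lift_rootLeft (hξ : ξ ^ 2 = algebraMap A T a) (hη : η ^ 2 = algebraMap A T b) :
    lift hξ hη rootLeft = ξ := by
  simp [lift, rootLeft]

@[simp]
lemma lift_rootRight (hξ : ξ ^ 2 = algebraMap A T a) (hη : η ^ 2 = algebraMap A T b) :
    lift hξ hη rootRight = η := by
  simp [lift, rootRight]

lemma algHom_ext {f g : BiquadraticAlgebra a b →ₐ[A] T} (hl : f rootLeft = g rootLeft)
    (hr : f rootRight = g rootRight) : f = g := by
  ext c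
  rw [eq_sum_roots c]
  simp [hl, hr]

end Lift

lemma rootLeft_mul_rootRight_add_mul_sub (s : A) :
    (rootLeft * rootRight + algebraMap A (BiquadraticAlgebra a b) s) *
      (rootLeft * rootRight - algebraMap A _ s) = algebraMap A _ (a * b - s ^ 2) := by
  simp only [map_sub, map_mul, map_pow]
  rw [← rootLeft_sq, ← rootRight_sq]
  ring

lemma eq_zero_of_rootLeft_mul_rootRight_add_mul_eq_zero {s : A}
    (hs : a * b - s ^ 2 ∈ nonZeroDivisors A) {c : BiquadraticAlgebra a b}
    (hc : (rootLeft * rootRight + algebraMap A _ s) * c = 0) : c = 0 := by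
  have hnorm : (a * b - s ^ 2) • c = 0 := by
    rw [Algebra.smul_def, ← rootLeft_mul_rootRight_add_mul_sub, mul_right_comm, hc, zero_mul]
  simpa [QuadraticAlgebra.ext_iff, mul_left_mem_nonZeroDivisors_eq_zero_iff hs] using hnorm

lemma exists_rootLeft_mul_rootRight_add_dvd_sub (s : A) (c : BiquadraticAlgebra a b) :
    ∃ b₀ b₁ b₂ : A, rootLeft * rootRight + algebraMap A _ s ∣
      c - (algebraMap A _ b₀ + rootLeft * algebraMap A _ b₁ + rootRight * algebraMap A _ b₂) := by
  refine ⟨c.re.re - s * c.im.im, c.re.im, c.im.re, algebraMap A _ c.im.im, ?_⟩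
  simp only [map_sub, map_mul]
  linear_combination eq_sum_roots c

lemma rootLeft_mul_rootRight_add_dvd_iff {s b₀ b₁ b₂ : A} :
    rootLeft * rootRight + algebraMap A (BiquadraticAlgebra a b) s ∣
        algebraMap A _ b₀ + rootLeft * algebraMap A _ b₁ + rootRight * algebraMap A _ b₂ ↔
      ∃ d₀ d₁ d₂ : A, b₀ = (a * b - s ^ 2) * d₀ ∧ b₁ = s * d₁ + b * d₂ ∧ b₂ = a * d₁ + s * d₂ := by
  constructor
  · rintro ⟨c, hc⟩
    have h₀ := congrArg (·.re.re) hc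
    have h₁ := congrArg (·.re.im) hc
    have h₂ := congrArg (·.im.re) hc
    have h₃ := congrArg (·.im.im) hc
    simp only [QuadraticAlgebra.C_eq_algebraMap, algebraMap_eq, rootLeft, rootRight,
      QuadraticAlgebra.mk_mul_mk, QuadraticAlgebra.re_add, QuadraticAlgebra.re_mul,
      QuadraticAlgebra.im_add, QuadraticAlgebra.im_mul, QuadraticAlgebra.algebraMap_re,
      QuadraticAlgebra.algebraMap_im, zero_mul, mul_one, mul_zero, add_zero, one_mul,
      zero_add] at h₀ h₁ h₂ h₃
    refine ⟨c.im.im, c.re.im, c.im.re, ?_, ?_, ?_⟩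
    · linear_combination h₀ - s * h₃
    · linear_combination h₁
    · linear_combination h₂
  · rintro ⟨d₀, d₁, d₂, rfl, rfl, rfl⟩
    refine ⟨algebraMap A _ (-s * d₀) + rootLeft * algebraMap A _ d₁ + rootRight * algebraMap A _ d₂
      + rootLeft * rootRight * algebraMap A _ d₀, ?_⟩
    simp only [map_sub, map_add, map_mul, map_pow, map_neg, ← rootLeft_sq, ← rootRight_sq]
    ring

end BiquadraticAlgebra

section BiquadraticQuotient

open BiquadraticAlgebra

variable {A R : Type*} [CommRing A] [CommRing R] [Algebra A R] {x y : R}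

/-- The ideal `(x² + a, y² + b)`, by which the quotient of the polynomial ring `A[x, y]` is
`A[√-a, √-b]`. -/
def biquadraticIdeal (x y : R) (a b : A) : Ideal R :=
  Ideal.span {x ^ 2 + algebraMap A R a, y ^ 2 + algebraMap A R b}

lemma mk_sq_left (x y : R) (a b : A) :
    Ideal.Quotient.mk (biquadraticIdeal x y a b) x ^ 2 = algebraMap A _ (-a) :=
  (Ideal.Quotient.mk_eq_mk_iff_sub_mem _ _).2 (Ideal.subset_span (by simp))

lemma mk_sq_right (x y : R) (a b : A) :
    Ideal.Quotient.mk (biquadraticIdeal x y a b) y ^ 2 = algebraMap A _ (-b) :=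
  (Ideal.Quotient.mk_eq_mk_iff_sub_mem _ _).2 (Ideal.subset_span (by simp))

namespace IsFreePair

variable (h : IsFreePair A x y) (a b : A)

lemma biquadraticIdeal_le_ker_lift :
    biquadraticIdeal x y a b ≤
      RingHom.ker (h.lift (rootLeft : BiquadraticAlgebra (-a) (-b)) rootRight) := by
  simp [biquadraticIdeal, Ideal.span_le, Set.pair_subset_iff, RingHom.mem_ker, rootLeft_sq,
    rootRight_sq]

/-- The homomorphism `A[x, y] / (x² + a, y² + b) → A[√-a, √-b]` induced by `x ↦ √-a`, `y ↦ √-b`. -/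
def quotientHom : R ⧸ biquadraticIdeal x y a b →ₐ[A] BiquadraticAlgebra (-a) (-b) :=
  Ideal.Quotient.liftₐ _ (h.lift rootLeft rootRight)
    fun _ hf ↦ h.biquadraticIdeal_le_ker_lift a b hf

@[simp]
lemma quotientHom_mk (f : R) :
    h.quotientHom a b (Ideal.Quotient.mk _ f) = h.lift rootLeft rootRight f := rfl

/-- The quotient of `A[x, y]` by `x² + a` and `y² + b`, identified with `A[√-a, √-b]`. -/
def quotientEquiv : (R ⧸ biquadraticIdeal x y a b) ≃ₐ[A] BiquadraticAlgebra (-a) (-b) :=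
  AlgEquiv.ofAlgHom (h.quotientHom a b)
    (BiquadraticAlgebra.lift (mk_sq_left x y a b) (mk_sq_right x y a b))
    (BiquadraticAlgebra.algHom_ext (by simp) (by simp))
    (Ideal.Quotient.algHom_ext _ (h.algHom_ext (by simp) (by simp)))

lemma quotientEquiv_mk (f : R) :
    h.quotientEquiv a b (Ideal.Quotient.mk _ f) = h.lift rootLeft rootRight f := rfl

include h in
lemma mul_add_mul_inj {b₁ b₂ c₁ c₂ : A} :
    x * algebraMap A R b₁ + y * algebraMap A R b₂ = x * algebraMap A R c₁ + y * algebraMap A R c₂ ↔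
      b₁ = c₁ ∧ b₂ = c₂ := by
  refine ⟨fun heq ↦ ?_, fun ⟨h₁, h₂⟩ ↦ by rw [h₁, h₂]⟩
  have := congrArg (h.lift (rootLeft : BiquadraticAlgebra (0 : A) 0) rootRight) heq
  simp only [map_add, map_mul, lift_left, lift_right, AlgHom.commutes] at this
  exact rootLeft_mul_add_rootRight_mul_injective this

lemma dvd_quotientEquiv_mk_iff {f g : R} :
    h.quotientEquiv a b (Ideal.Quotient.mk _ g) ∣ h.quotientEquiv a b (Ideal.Quotient.mk _ f) ↔
      f ∈ biquadraticIdeal x y a b ⊔ Ideal.span {g} := by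
  rw [map_dvd_iff, ← Ideal.mem_span_singleton, ← Set.image_singleton, ← Ideal.map_span,
    Ideal.mem_quotient_iff_mem_sup, sup_comm]

variable {a b} {s : A}

lemma mem_sup_span_iff_dvd {f : R} :
    f ∈ biquadraticIdeal x y a b ⊔ Ideal.span {x * y + algebraMap A R s} ↔
      rootLeft * rootRight + algebraMap A (BiquadraticAlgebra (-a) (-b)) s ∣
        h.lift rootLeft rootRight f := by
  rw [← h.dvd_quotientEquiv_mk_iff, quotientEquiv_mk, quotientEquiv_mk]
  simp

include h in
lemma mem_biquadraticIdeal_of_mul_mem (hs : a * b - s ^ 2 ∈ nonZeroDivisors A) {f : R}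
    (hf : (x * y + algebraMap A R s) * f ∈ biquadraticIdeal x y a b) :
    f ∈ biquadraticIdeal x y a b := by
  rw [← Ideal.Quotient.eq_zero_iff_mem, ← map_eq_zero_iff _ (h.quotientEquiv a b).injective,
    quotientEquiv_mk] at hf ⊢
  simp only [map_add, map_mul, lift_left, lift_right, AlgHom.commutes] at hf
  rw [← neg_mul_neg] at hs
  exact eq_zero_of_rootLeft_mul_rootRight_add_mul_eq_zero hs hf

include h in
lemma exists_sub_mem (a b s : A) (f : R) : ∃ b₀ b₁ b₂ : A,
    f - (algebraMap A R b₀ + x * algebraMap A R b₁ + y * algebraMap A R b₂) ∈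
      biquadraticIdeal x y a b ⊔ Ideal.span {x * y + algebraMap A R s} := by
  simpa only [h.mem_sup_span_iff_dvd, map_sub, map_add, map_mul, lift_left, lift_right,
    AlgHom.commutes] using
    exists_rootLeft_mul_rootRight_add_dvd_sub s
      (h.lift (rootLeft : BiquadraticAlgebra (-a) (-b)) rootRight f)

include h in
lemma add_mul_add_mul_mem_iff {b₀ b₁ b₂ : A} :
    algebraMap A R b₀ + x * algebraMap A R b₁ + y * algebraMap A R b₂ ∈
        biquadraticIdeal x y a b ⊔ Ideal.span {x * y + algebraMap A R s} ↔
      ∃ d₀ d₁ d₂ : A, b₀ = (a * b - s ^ 2) * d₀ ∧ b₁ = s * d₁ - b * d₂ ∧ b₂ = s * d₂ - a * d₁ := by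
  simp only [h.mem_sup_span_iff_dvd, map_add, map_mul, lift_left, lift_right, AlgHom.commutes,
    rootLeft_mul_rootRight_add_dvd_iff, neg_mul, mul_neg, neg_neg, ← sub_eq_add_neg,
    neg_add_eq_sub]

end IsFreePair

end BiquadraticQuotient

section MvPolynomialVars

variable {σ K : Type*}

lemma vars_subset_vars_of_dvd [CommSemiring K] [NoZeroDivisors K] {p q : MvPolynomial σ K}
    (hq : q ≠ 0) (hpq : p ∣ q) : p.vars ⊆ q.vars := by
  obtain ⟨r, rfl⟩ := hpq
  intro i hi
  rw [mem_vars_iff_degreeOf_ne_zero] at hi ⊢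
  rw [degreeOf_mul_eq (left_ne_zero_of_mul hq) (right_ne_zero_of_mul hq)]
  exact (Nat.add_pos_left (Nat.pos_of_ne_zero hi) _).ne'

lemma isRelPrime_of_mem_supported [Field K] {s t : Set σ} (hst : Disjoint s t)
    {p q : MvPolynomial σ K} (hp : p ≠ 0) (hq : q ≠ 0) (hps : p ∈ supported K s)
    (hqt : q ∈ supported K t) : IsRelPrime p q := by
  intro d hdp hdq
  have hs : (d.vars : Set σ) ⊆ s :=
    subset_trans (vars_subset_vars_of_dvd hp hdp) (mem_supported.1 hps)
  have ht : (d.vars : Set σ) ⊆ t :=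
    subset_trans (vars_subset_vars_of_dvd hq hdq) (mem_supported.1 hqt)
  have hvars : d.vars = ∅ := Finset.coe_eq_empty.1 (Set.subset_eq_empty (hst hs ht) rfl)
  have hd : d = C (coeff 0 d) := vars_eq_empty_iff_eq_C.1 hvars
  have hcoeff : coeff 0 d ≠ 0 := fun h ↦ ne_zero_of_dvd_ne_zero hp hdp (by rw [hd, h, C_0])
  rw [hd]
  exact (IsUnit.mk0 _ hcoeff).map C

end MvPolynomialVars

section SumIdentities

variable {ι R : Type*} [CommRing R] (s : Finset ι) (f g : ι → R)

lemma sum_sum_mul_sub_mul_sq :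
    ∑ i ∈ s, ∑ j ∈ s, (f i * g j - g i * f j) ^ 2 =
      2 * ((∑ i ∈ s, f i ^ 2) * (∑ i ∈ s, g i ^ 2) - (∑ i ∈ s, f i * g i) ^ 2) := by
  have hexpand : ∀ i j, (f i * g j - g i * f j) ^ 2 =
      f i ^ 2 * g j ^ 2 + g i ^ 2 * f j ^ 2 - 2 * (f i * g i * (f j * g j)) := fun i j ↦ by ring
  simp only [hexpand, Finset.sum_sub_distrib, Finset.sum_add_distrib, ← Finset.mul_sum,
    ← Finset.sum_mul]
  ring

lemma sum_mul_mul_sub_mul (u v d e : R) :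
    ∑ i ∈ s, (f i * (u * g i - v * f i) * d - g i * (u * g i - v * f i) * e) =
      u * ((∑ i ∈ s, f i * g i) * d - (∑ i ∈ s, g i ^ 2) * e) +
        v * ((∑ i ∈ s, f i * g i) * e - (∑ i ∈ s, f i ^ 2) * d) := by
  simp only [Finset.sum_mul, Finset.mul_sum, mul_sub, ← Finset.sum_sub_distrib,
    ← Finset.sum_add_distrib]
  exact Finset.sum_congr rfl fun i _ ↦ by ring

end SumIdentities

section Ghosts

open RingTheory.Sequence

variable {N : ℕ}

lemma PP_ne_zero (hN : 0 < N) : PP N ≠ 0 := fun h ↦ by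
  simpa [PP, ψ, hN.ne'] using congrArg (eval 1) h

lemma QQ_ne_zero (hN : 0 < N) : QQ N ≠ 0 := fun h ↦ by
  simpa [QQ, χ, hN.ne'] using congrArg (eval 1) h

lemma isRelPrime_PP_QQ (hN : 0 < N) : IsRelPrime (PP N) (QQ N) :=
  isRelPrime_of_mem_supported Set.isCompl_range_inl_range_inr.disjoint
    (PP_ne_zero hN) (QQ_ne_zero hN)
    (sum_mem fun i _ ↦ pow_mem (X_mem_supported.2 (Set.mem_range_self i)) 2)
    (sum_mem fun i _ ↦ pow_mem (X_mem_supported.2 (Set.mem_range_self i)) 2)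

lemma isWeaklyRegular_PP_QQ (hN : 0 < N) : IsWeaklyRegular (R3 N) [PP N, QQ N] :=
  isWeaklyRegular_pair_iff.2 ⟨mem_nonZeroDivisors_of_ne_zero (PP_ne_zero hN),
    fun _ ↦ (isRelPrime_PP_QQ hN).dvd_of_dvd_mul_left⟩

variable (hN : 0 < N)

lemma isFreePair_ghosts :
    IsFreePair (coefRing3 N hN) (ψ ⟨0, hN⟩ : R3 N) (χ ⟨0, hN⟩) :=
  isFreePair_X Sum.inl_ne_inr

variable {hN}

lemma ψ_mem_coefRing3 {i : Fin N} (hi : i ≠ ⟨0, hN⟩) : ψ i ∈ coefRing3 N hN :=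
  X_mem_supported.2 (by simpa)

lemma χ_mem_coefRing3 {i : Fin N} (hi : i ≠ ⟨0, hN⟩) : χ i ∈ coefRing3 N hN :=
  X_mem_supported.2 (by simpa)

variable (hN)

/-- `P - ψ₁²`, the part of `P` lying in the coefficient ring. -/
def restP : coefRing3 N hN :=
  ⟨∑ i ∈ Finset.univ.erase ⟨0, hN⟩, ψ i ^ 2,
    sum_mem fun _ hi ↦ pow_mem (ψ_mem_coefRing3 (Finset.ne_of_mem_erase hi)) 2⟩

/-- `Q - χ₁²`, the part of `Q` lying in the coefficient ring. -/
def restQ : coefRing3 N hN :=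
  ⟨∑ i ∈ Finset.univ.erase ⟨0, hN⟩, χ i ^ 2,
    sum_mem fun _ hi ↦ pow_mem (χ_mem_coefRing3 (Finset.ne_of_mem_erase hi)) 2⟩

/-- `S - ψ₁χ₁`, the part of `S` lying in the coefficient ring. -/
def restS : coefRing3 N hN :=
  ⟨∑ i ∈ Finset.univ.erase ⟨0, hN⟩, ψ i * χ i,
    sum_mem fun _ hi ↦ mul_mem (ψ_mem_coefRing3 (Finset.ne_of_mem_erase hi))
      (χ_mem_coefRing3 (Finset.ne_of_mem_erase hi))⟩

lemma sq_add_restP : ψ ⟨0, hN⟩ ^ 2 + algebraMap _ (R3 N) (restP hN) = PP N :=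
  Finset.add_sum_erase _ (fun i ↦ ψ i ^ 2) (Finset.mem_univ _)

lemma sq_add_restQ : χ ⟨0, hN⟩ ^ 2 + algebraMap _ (R3 N) (restQ hN) = QQ N :=
  Finset.add_sum_erase _ (fun i ↦ χ i ^ 2) (Finset.mem_univ _)

lemma mul_add_restS : ψ ⟨0, hN⟩ * χ ⟨0, hN⟩ + algebraMap _ (R3 N) (restS hN) = SS N :=
  Finset.add_sum_erase _ (fun i ↦ ψ i * χ i) (Finset.mem_univ _)

lemma biquadraticIdeal_rest :
    biquadraticIdeal (ψ ⟨0, hN⟩) (χ ⟨0, hN⟩) (restP hN) (restQ hN) =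
      Ideal.span {PP N, QQ N} := by
  rw [biquadraticIdeal, sq_add_restP, sq_add_restQ]

lemma biquadraticIdeal_rest_sup_span :
    biquadraticIdeal (ψ ⟨0, hN⟩) (χ ⟨0, hN⟩) (restP hN) (restQ hN) ⊔
        Ideal.span {ψ ⟨0, hN⟩ * χ ⟨0, hN⟩ + algebraMap _ (R3 N) (restS hN)} =
      Ideal.span {PP N, QQ N, SS N} := by
  rw [biquadraticIdeal_rest, mul_add_restS, ← Ideal.span_union, Set.insert_union,
    Set.singleton_union]

lemma algebraMap_restP_mul_restQ_sub_restS_sq :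
    algebraMap _ (R3 N) (restP hN * restQ hN - restS hN ^ 2) =
      C (1 / 2 : ℂ) * ∑ i ∈ Finset.univ.erase ⟨0, hN⟩, ∑ j ∈ Finset.univ.erase ⟨0, hN⟩,
        (ψ i * χ j - χ i * ψ j) ^ 2 := by
  rw [sum_sum_mul_sub_mul_sq, ← mul_assoc, ← map_ofNat C, ← C_mul, one_div_mul_cancel two_ne_zero,
    C_1, one_mul]
  rfl

lemma restP_mul_restQ_sub_restS_sq_ne_zero (h3 : 3 ≤ N) :
    restP hN * restQ hN - restS hN ^ 2 ≠ 0 := by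
  intro h
  have heval := congrArg (fun c : coefRing3 N hN ↦ eval (Sum.elim
    (Pi.single ⟨1, by omega⟩ 1) (Pi.single ⟨2, by omega⟩ 1)) (c : R3 N)) h
  simp [restP, restQ, restS, ψ, χ, Pi.single_apply, ite_pow] at heval

lemma ψ_mul_add_χ_mul_eq_sum_iff {b₁ b₂ d e : coefRing3 N hN} :
    ψ ⟨0, hN⟩ * (b₁ : R3 N) + χ ⟨0, hN⟩ * (b₂ : R3 N) =
        ∑ i ∈ Finset.univ.erase ⟨0, hN⟩, (ψ i * (ψ ⟨0, hN⟩ * χ i - χ ⟨0, hN⟩ * ψ i) * (d : R3 N) -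
          χ i * (ψ ⟨0, hN⟩ * χ i - χ ⟨0, hN⟩ * ψ i) * (e : R3 N)) ↔
      b₁ = restS hN * d - restQ hN * e ∧ b₂ = restS hN * e - restP hN * d := by
  rw [sum_mul_mul_sub_mul, ← (isFreePair_ghosts hN).mul_add_mul_inj, map_sub, map_sub]
  rfl

lemma add_ψ_mul_add_χ_mul_mem_span_iff {b₀ b₁ b₂ : coefRing3 N hN} :
    (b₀ + ψ ⟨0, hN⟩ * b₁ + χ ⟨0, hN⟩ * b₂ : R3 N) ∈ Ideal.span {PP N, QQ N, SS N} ↔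
      ∃ d₀ d₁ d₂ : coefRing3 N hN,
        (b₀ : R3 N) = C (1 / 2 : ℂ) * (∑ i ∈ Finset.univ.erase ⟨0, hN⟩,
          ∑ j ∈ Finset.univ.erase ⟨0, hN⟩, (ψ i * χ j - χ i * ψ j) ^ 2) * (d₀ : R3 N) ∧
        ψ ⟨0, hN⟩ * (b₁ : R3 N) + χ ⟨0, hN⟩ * (b₂ : R3 N) =
          ∑ i ∈ Finset.univ.erase ⟨0, hN⟩,
            (ψ i * (ψ ⟨0, hN⟩ * χ i - χ ⟨0, hN⟩ * ψ i) * (d₁ : R3 N) -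
              χ i * (ψ ⟨0, hN⟩ * χ i - χ ⟨0, hN⟩ * ψ i) * (d₂ : R3 N)) := by
  simp only [← algebraMap_restP_mul_restQ_sub_restS_sq, ψ_mul_add_χ_mul_eq_sum_iff,
    ← biquadraticIdeal_rest_sup_span hN]
  refine (isFreePair_ghosts hN).add_mul_add_mul_mem_iff.trans ?_
  exact exists_congr fun d₀ ↦ exists₂_congr fun d₁ d₂ ↦
    and_congr_left' (Subtype.coe_injective.eq_iff (b := (_ * d₀))).symm

lemma isWeaklyRegular_PP_QQ_SS (hN : 3 ≤ N) : IsWeaklyRegular (R3 N) [PP N, QQ N, SS N] := by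
  have hN₀ : 0 < N := by omega
  refine isWeaklyRegular_triple_iff.2 ⟨isWeaklyRegular_PP_QQ hN₀, fun f hf ↦ ?_⟩
  rw [← biquadraticIdeal_rest hN₀] at hf ⊢
  rw [← mul_add_restS hN₀] at hf
  exact (isFreePair_ghosts hN₀).mem_biquadraticIdeal_of_mul_mem
    (mem_nonZeroDivisors_of_ne_zero (restP_mul_restQ_sub_restS_sq_ne_zero hN₀ hN)) hf

end Ghosts

section Cohomology

open RingTheory.Sequence

variable {N : ℕ}

lemma isLinearMap_d3 : IsLinearMap (R3 N) (d3 (N := N)) where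
  map_add ω ω' := by ext1 k; fin_cases k <;> simp [d3] <;> ring
  map_smul r ω := by ext1 k; fin_cases k <;> simp [d3] <;> ring

lemma d3_d3 (ω : Om3 N) : d3 (d3 ω) = 0 := by
  ext1 k; fin_cases k <;> simp [d3] <;> ring

lemma d3_ofR3 (r : R3 N) : d3 (ofR3 r) = 0 := by
  ext1 k; fin_cases k <;> simp [d3, ofR3]

namespace Equiv3

variable {ω ω' ω'' : Om3 N}

lemma trans : Equiv3 ω ω' → Equiv3 ω' ω'' → Equiv3 ω ω'' := by
  rintro ⟨ρ, hρ⟩ ⟨ρ', hρ'⟩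
  exact ⟨ρ + ρ', by rw [isLinearMap_d3.map_add, ← hρ, ← hρ', sub_add_sub_cancel]⟩

lemma d3_eq : Equiv3 ω ω' → d3 ω = d3 ω' := by
  rintro ⟨ρ, hρ⟩
  rw [← sub_eq_zero, ← isLinearMap_d3.map_sub, hρ, d3_d3]

end Equiv3

lemma equiv3_ofR3_of_d3_eq_zero (hreg : IsWeaklyRegular (R3 N) [PP N, QQ N, SS N])
    {ω : Om3 N} (hω : d3 ω = 0) : Equiv3 ω (ofR3 (ω 0)) := by
  obtain ⟨hpair, -⟩ := isWeaklyRegular_triple_iff.1 hreg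
  obtain ⟨hP, -⟩ := isWeaklyRegular_pair_iff.1 hpair
  obtain ⟨u, v, w, h₁, h₂, h₃⟩ := exists_eq_of_isWeaklyRegular_triple hreg (congrFun hω 0)
  obtain ⟨e, h₅, h₆⟩ := exists_eq_mul_of_isWeaklyRegular_pair hpair (congrFun hω 3)
  have h₇ : ω 7 = 0 := mem_nonZeroDivisors_iff_left.1 hP _ (congrFun hω 6)
  have hd₂ : PP N * ω 4 - SS N * ω 6 = 0 := congrFun hω 2
  have h₄ : ω 4 = SS N * e :=
    (mul_cancel_left_mem_nonZeroDivisors hP).1 (by linear_combination hd₂ + SS N * h₆)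
  refine ⟨![0, 0, 0, 0, u, v, w, e], ?_⟩
  ext1 k
  fin_cases k <;> simp [d3, ofR3, h₁, h₂, h₃, h₄, h₅, h₆, h₇]

lemma equiv3_ofR3_iff {r r' : R3 N} :
    Equiv3 (ofR3 r) (ofR3 r') ↔ r - r' ∈ Ideal.span {PP N, QQ N, SS N} := by
  simp only [Ideal.span, Submodule.mem_span_triple, smul_eq_mul]
  constructor
  · rintro ⟨ρ, hρ⟩
    have hρ₀ : r - r' = PP N * ρ 1 + QQ N * ρ 2 + SS N * ρ 3 := congrFun hρ 0
    exact ⟨ρ 1, ρ 2, ρ 3, by rw [hρ₀]; ring⟩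
  · rintro ⟨u, v, w, huvw⟩
    refine ⟨![0, u, v, w, 0, 0, 0, 0], ?_⟩
    ext1 k
    fin_cases k <;> simp [d3, ofR3, ← huvw, mul_comm]

lemma ofR3_zero : ofR3 (0 : R3 N) = 0 := by
  ext1 k; fin_cases k <;> rfl

lemma d3_eq_zero_iff (hN : 3 ≤ N) {ω : Om3 N} : d3 ω = 0 ↔ ∃ r, Equiv3 ω (ofR3 r) :=
  ⟨fun hω ↦ ⟨_, equiv3_ofR3_of_d3_eq_zero (isWeaklyRegular_PP_QQ_SS hN) hω⟩,
    fun ⟨r, hr⟩ ↦ hr.d3_eq.trans (d3_ofR3 r)⟩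

end Cohomology

/-- for `N ≥ 3`, (i) `dω = 0` iff `ω ∼ b₀₀ + ψ₁b₁₀ + χ₁b₀₁` with
coefficients in `ℂ[ψ₂,…,ψ_N, χ₂,…,χ_N]`; (ii) such a combination is `∼ 0` iff
`b₀₀ = ½ Σ_{i,j≥2} (ψᵢχⱼ − χᵢψⱼ)² d₁₁` and
`ψ₁b₁₀ + χ₁b₀₁ = Σ_{i≥2} [ψᵢ(ψ₁χᵢ − χ₁ψᵢ)d₁₀ − χᵢ(ψ₁χᵢ − χ₁ψᵢ)d₀₁]` for some
`d₁₁, d₁₀, d₀₁ ∈ ℂ[ψ₂,…,ψ_N, χ₂,…,χ_N]`. -/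
theorem stmt8 (N : ℕ) (hN : 3 ≤ N) :
    (∀ ω : Om3 N, d3 ω = 0 ↔
      ∃ b00 ∈ coefRing3 N (by omega), ∃ b10 ∈ coefRing3 N (by omega),
      ∃ b01 ∈ coefRing3 N (by omega),
        Equiv3 ω (ofR3 (b00 + ψ ⟨0, by omega⟩ * b10 + χ ⟨0, by omega⟩ * b01)))
    ∧
    (∀ b00 b10 b01 : R3 N,
      b00 ∈ coefRing3 N (by omega) → b10 ∈ coefRing3 N (by omega) →
      b01 ∈ coefRing3 N (by omega) →
      (Equiv3 (ofR3 (b00 + ψ ⟨0, by omega⟩ * b10 + χ ⟨0, by omega⟩ * b01)) 0 ↔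
        ∃ d11 ∈ coefRing3 N (by omega), ∃ d10 ∈ coefRing3 N (by omega),
        ∃ d01 ∈ coefRing3 N (by omega),
          b00 = C (1/2 : ℂ)
              * (∑ i ∈ Finset.univ.erase (⟨0, by omega⟩ : Fin N),
                 ∑ j ∈ Finset.univ.erase (⟨0, by omega⟩ : Fin N),
                   (ψ i * χ j - χ i * ψ j) ^ 2) * d11
          ∧ ψ (⟨0, by omega⟩ : Fin N) * b10 + χ (⟨0, by omega⟩ : Fin N) * b01
            = ∑ i ∈ Finset.univ.erase (⟨0, by omega⟩ : Fin N),
                (ψ i * (ψ ⟨0, by omega⟩ * χ i - χ ⟨0, by omega⟩ * ψ i) * d10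
                 - χ i * (ψ ⟨0, by omega⟩ * χ i - χ ⟨0, by omega⟩ * ψ i) * d01))) := by
  have h₀ : 0 < N := by omega
  refine ⟨fun ω ↦ (d3_eq_zero_iff hN).trans ⟨fun ⟨r, hr⟩ ↦ ?_, fun ⟨_, _, _, _, _, _, h⟩ ↦ ⟨_, h⟩⟩,
    fun b00 b10 b01 h00 h10 h01 ↦ ?_⟩
  · obtain ⟨b00, b10, b01, hb⟩ := (isFreePair_ghosts h₀).exists_sub_mem (restP h₀) (restQ h₀)
      (restS h₀) r
    rw [biquadraticIdeal_rest_sup_span] at hb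
    exact ⟨b00, b00.2, b10, b10.2, b01, b01.2, hr.trans (equiv3_ofR3_iff.2 hb)⟩
  · lift b00 to coefRing3 N h₀ using h00
    lift b10 to coefRing3 N h₀ using h10
    lift b01 to coefRing3 N h₀ using h01
    rw [← ofR3_zero, equiv3_ofR3_iff, sub_zero, add_ψ_mul_add_χ_mul_mem_span_iff]
    exact ⟨fun ⟨d11, d10, d01, h⟩ ↦ ⟨d11, d11.2, d10, d10.2, d01, d01.2, h⟩,
      fun ⟨d11, h11, d10, h10, d01, h01, h⟩ ↦ ⟨⟨d11, h11⟩, ⟨d10, h10⟩, ⟨d01, h01⟩, h⟩⟩
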